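/- Let (M,g,φ,ξ,η) be a (2n+1)-dimensional para-Sasaki-like Riemannian manifold with generalized symmetric metric connection ∇̄, where α and β are constants. Then R̄(ξ,y)ξ = (1−β)φ²y − αφy for every vector field y, where R̄ is the curvature tensor of ∇̄. -/

import Mathlib

/-- Abstract algebraic model of an almost paracontact almost paracomplex
Riemannian (apapR) manifold of dimension `2 n + 1`.  Here `R` plays the role of
the commutative ring of smooth functions `C^∞(M)` and `V` the `R`-module of
vector fields.  `act x f` is the derivative `x(f)` of a function along a vector
field, `bracket` is the Lie bracket, `g` the Riemannian metric, `(phi, xi, eta)`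
the almost paracontact almost paracomplex structure, `nab` the Levi-Civita
connection of `g` and `e` a (local) orthonormal frame with `e 0 = xi`. -/
structure ApapR (R V : Type*) [CommRing R] [Algebra ℝ R]
    [AddCommGroup V] [Module R V] where
  n : ℕ
  act : V → R → R
  bracket : V → V → V
  g : V → V → R
  phi : V → V
  xi : V
  eta : V → R
  nab : V → V → V
  e : Fin (2 * n + 1) → V
  act_addl : ∀ x y f, act (x + y) f = act x f + act y f
  act_smull : ∀ (h : R) (x : V) f, act (h • x) f = h * act x f
  act_addr : ∀ x f h, act x (f + h) = act x f + act x h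
  act_mul : ∀ x f h, act x (f * h) = f * act x h + h * act x f
  g_symm : ∀ x y, g x y = g y x
  g_addl : ∀ x y z, g (x + y) z = g x z + g y z
  g_smull : ∀ (f : R) x y, g (f • x) y = f * g x y
  phi_add : ∀ x y, phi (x + y) = phi x + phi y
  phi_smul : ∀ (f : R) x, phi (f • x) = f • phi x
  eta_eq : ∀ x, eta x = g x xi
  -- apapR structure axioms
  eta_xi : eta xi = 1
  phi_phi : ∀ x, phi (phi x) = x - eta x • xi
  phi_xi : phi xi = 0
  g_phi_phi : ∀ x y, g (phi x) (phi y) = g x y - eta x * eta y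
  -- orthonormal frame, `tr φ = 0`
  e_zero : e 0 = xi
  e_orthonormal : ∀ i j, g (e i) (e j) = if i = j then 1 else 0
  trace_phi : (∑ i, g (phi (e i)) (e i)) = 0
  -- Levi-Civita connection axioms
  nab_addl : ∀ x y z, nab (x + y) z = nab x z + nab y z
  nab_smull : ∀ (f : R) x y, nab (f • x) y = f • nab x y
  nab_addr : ∀ x y z, nab x (y + z) = nab x y + nab x z
  nab_leibniz : ∀ x (f : R) y, nab x (f • y) = f • nab x y + act x f • y
  nab_metric : ∀ x y z, act x (g y z) = g (nab x y) z + g y (nab x z)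
  nab_torsion : ∀ x y, nab x y - nab y x = bracket x y

namespace ApapR

variable {R V : Type*} [CommRing R] [Algebra ℝ R] [AddCommGroup V] [Module R V]

/-- The para-Sasaki-like condition `(∇_x φ)y = −g(x,y)ξ − η(y)x + 2η(x)η(y)ξ`. -/
def IsParaSasakiLike (S : ApapR R V) : Prop :=
  ∀ x y, S.nab x (S.phi y) - S.phi (S.nab x y)
    = -(S.g x y • S.xi) - S.eta y • x + (2 * S.eta x * S.eta y) • S.xi

/-- The generalized symmetric metric connection
`∇̄_x y = ∇_x y + α{g(x,y)ξ − η(y)x} + β{g(φx,y)ξ − η(y)φx}`. -/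
def gsmc (S : ApapR R V) (α β : R) (x y : V) : V :=
  S.nab x y + (α * S.g x y) • S.xi - (α * S.eta y) • x
    + (β * S.g (S.phi x) y) • S.xi - (β * S.eta y) • S.phi x

/-- Curvature tensor of a connection `D`:
`R_D(x,y)z = D_x D_y z − D_y D_x z − D_[x,y] z`. -/
def curv (S : ApapR R V) (D : V → V → V) (x y z : V) : V :=
  D x (D y z) - D y (D x z) - D (S.bracket x y) z

/-- Ricci tensor of a connection `D` with respect to the orthonormal frame. -/
def ric (S : ApapR R V) (D : V → V → V) (x y : V) : R :=
  ∑ i, S.g (S.curv D (S.e i) x y) (S.e i)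

/-- Scalar curvature of a connection `D`. -/
def scal (S : ApapR R V) (D : V → V → V) : R :=
  ∑ i, S.ric D (S.e i) (S.e i)

/-- Divergence of a vector field with respect to a connection `D`. -/
def divg (S : ApapR R V) (D : V → V → V) (x : V) : R :=
  ∑ i, S.g (D (S.e i) x) (S.e i)

/-- The associated metric `g̃(x,y) = g(x,φy) + η(x)η(y)`. -/
def tg (S : ApapR R V) (x y : V) : R := S.g x (S.phi y) + S.eta x * S.eta y

/-- A function is constant iff all its derivatives vanish. -/
def IsConstant (S : ApapR R V) (f : R) : Prop := ∀ x, S.act x f = 0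

end ApapR

namespace ApapR

variable {R V : Type*} [CommRing R] [Algebra ℝ R] [AddCommGroup V] [Module R V]

/-!
On a para-Sasaki-like manifold `∇_x ξ = φx`, so that `∇̄_x ξ = Ax` with `A = (1 − β)φ − αφ²`, while
`∇̄_ξ = ∇_ξ`, which commutes with `φ`. Since `Aξ = 0` and `[ξ, y] = ∇_ξ y − φy`, we get
`R̄(ξ, y)ξ = ∇_ξ(Ay) − A(∇_ξ y − φy) = (∇_ξ A)y + Aφy`. Here `Aφy = (1 − β)φ²y − αφy` because
`φ³ = φ`, and `∇_ξ A = −ξ(β)φ − ξ(α)φ²` vanishes for constant `α` and `β`.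
-/

section Structure

variable (S : ApapR R V)

theorem phi_zero : S.phi 0 = 0 :=
  map_zero (AddMonoidHom.mk' S.phi S.phi_add)

theorem phi_sub (x y : V) : S.phi (x - y) = S.phi x - S.phi y :=
  map_sub (AddMonoidHom.mk' S.phi S.phi_add) x y

theorem phi_phi_phi (x : V) : S.phi (S.phi (S.phi x)) = S.phi x := by
  rw [S.phi_phi x, phi_sub, S.phi_smul, S.phi_xi, smul_zero, sub_zero]

theorem g_zero_left (x : V) : S.g 0 x = 0 := by
  simpa using S.g_smull 0 0 x

theorem g_zero_right (x : V) : S.g x 0 = 0 := by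
  rw [S.g_symm, g_zero_left]

theorem g_xi_left (x : V) : S.g S.xi x = S.eta x := by
  rw [S.g_symm, S.eta_eq]

theorem eta_zero : S.eta 0 = 0 := by
  rw [S.eta_eq, g_zero_left]

theorem eta_smul (f : R) (x : V) : S.eta (f • x) = f * S.eta x := by
  rw [S.eta_eq, S.eta_eq, S.g_smull]

theorem eta_phi (x : V) : S.eta (S.phi x) = 0 := by
  have smul_xi_eq_zero : S.eta (S.phi x) • S.xi = 0 := by
    -- `φ³x` computed as `φ²(φx)` and as `φ(φ²x)`
    rw [← sub_eq_self (a := S.phi x), ← S.phi_phi, phi_phi_phi]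
  calc S.eta (S.phi x) = S.eta (S.eta (S.phi x) • S.xi) := by rw [eta_smul, S.eta_xi, mul_one]
    _ = 0 := by rw [smul_xi_eq_zero, eta_zero]

theorem act_one (x : V) : S.act x 1 = 0 := by
  simpa using S.act_mul x 1 1

theorem act_sub (x : V) (f h : R) : S.act x (f - h) = S.act x f - S.act x h :=
  map_sub (AddMonoidHom.mk' (S.act x) (S.act_addr x)) f h

theorem nab_zero_right (x : V) : S.nab x 0 = 0 :=
  map_zero (AddMonoidHom.mk' (S.nab x) (S.nab_addr x))

theorem nab_sub_right (x y z : V) : S.nab x (y - z) = S.nab x y - S.nab x z :=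
  map_sub (AddMonoidHom.mk' (S.nab x) (S.nab_addr x)) y z

theorem eta_nab_xi (x : V) : S.eta (S.nab x S.xi) = 0 := by
  have two_smul_eq_zero : (2 : ℝ) • S.eta (S.nab x S.xi) = 0 := by
    -- differentiate `g(ξ, ξ) = 1` along `x`
    rw [two_smul, ← S.act_one x, ← S.eta_xi, S.eta_eq S.xi, S.nab_metric, g_xi_left, S.eta_eq]
  exact (smul_eq_zero_iff_right two_ne_zero).mp two_smul_eq_zero

theorem gsmc_zero_right (α β : R) (x : V) : S.gsmc α β x 0 = 0 := by
  simp [gsmc, nab_zero_right, g_zero_right, eta_zero]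

theorem gsmc_xi_left (α β : R) (x : V) : S.gsmc α β S.xi x = S.nab S.xi x := by
  simp [gsmc, S.phi_xi, g_zero_left, g_xi_left]

end Structure

namespace IsParaSasakiLike

variable {S : ApapR R V}

theorem nab_xi (hS : S.IsParaSasakiLike) (x : V) : S.nab x S.xi = S.phi x := by
  have phi_nab_xi : S.phi (S.nab x S.xi) = S.phi (S.phi x) := by
    have h := hS x S.xi
    rw [S.phi_xi, nab_zero_right, zero_sub, S.eta_xi, ← S.eta_eq, neg_eq_iff_eq_neg] at h
    rw [h, S.phi_phi]
    module
  calc S.nab x S.xi = S.phi (S.phi (S.nab x S.xi)) := by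
        rw [S.phi_phi, eta_nab_xi, zero_smul, sub_zero]
    _ = S.phi x := by rw [phi_nab_xi, phi_phi_phi]

theorem nab_xi_phi (hS : S.IsParaSasakiLike) (y : V) :
    S.nab S.xi (S.phi y) = S.phi (S.nab S.xi y) := by
  rw [← sub_eq_zero, hS, g_xi_left, S.eta_xi]
  module

theorem bracket_xi_left (hS : S.IsParaSasakiLike) (y : V) :
    S.bracket S.xi y = S.nab S.xi y - S.phi y := by
  rw [← S.nab_torsion, hS.nab_xi]

theorem gsmc_xi_right (hS : S.IsParaSasakiLike) (α β : R) (x : V) :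
    S.gsmc α β x S.xi = (1 - β) • S.phi x - α • S.phi (S.phi x) := by
  rw [gsmc, hS.nab_xi, ← S.eta_eq, ← S.eta_eq, eta_phi, S.eta_xi, S.phi_phi]
  module

theorem gsmc_xi_xi (hS : S.IsParaSasakiLike) (α β : R) : S.gsmc α β S.xi S.xi = 0 := by
  simp [hS.gsmc_xi_right, S.phi_xi, phi_zero]

theorem nab_xi_gsmc_xi (hS : S.IsParaSasakiLike) (α β : R) (y : V) :
    S.nab S.xi (S.gsmc α β y S.xi) = S.gsmc α β (S.nab S.xi y) S.xi
      - S.act S.xi β • S.phi y - S.act S.xi α • S.phi (S.phi y) := by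
  simp only [hS.gsmc_xi_right, nab_sub_right, S.nab_leibniz, hS.nab_xi_phi, act_sub, act_one]
  module

end IsParaSasakiLike

theorem curv_gsmc_xi_xi_general (S : ApapR R V) (hS : S.IsParaSasakiLike) (α β : R) (y : V) :
    S.curv (S.gsmc α β) S.xi y S.xi
      = (1 - β - S.act S.xi α) • S.phi (S.phi y) - (α + S.act S.xi β) • S.phi y := by
  calc S.curv (S.gsmc α β) S.xi y S.xi
      = S.nab S.xi (S.gsmc α β y S.xi) - S.gsmc α β (S.nab S.xi y - S.phi y) S.xi := by
        rw [curv, gsmc_xi_left, hS.gsmc_xi_xi, gsmc_zero_right, sub_zero, hS.bracket_xi_left]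
    _ = S.gsmc α β (S.phi y) S.xi
          - S.act S.xi β • S.phi y - S.act S.xi α • S.phi (S.phi y) := by
        rw [hS.nab_xi_gsmc_xi]
        simp only [hS.gsmc_xi_right, phi_sub]
        module
    _ = (1 - β - S.act S.xi α) • S.phi (S.phi y) - (α + S.act S.xi β) • S.phi y := by
        rw [hS.gsmc_xi_right, phi_phi_phi]
        module

/-- `R̄(ξ,y)ξ = (1−β)φ²y − αφy` on a para-Sasaki-like manifold,
for constants `α`, `β`. -/
theorem curv_gsmc_xi_xi (S : ApapR R V) (hS : S.IsParaSasakiLike) (α β : R)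
    (hα : S.IsConstant α) (hβ : S.IsConstant β) (y : V) :
    S.curv (S.gsmc α β) S.xi y S.xi
      = (1 - β) • S.phi (S.phi y) - α • S.phi y := by
  rw [curv_gsmc_xi_xi_general S hS, hα, hβ, sub_zero, add_zero]

end ApapR
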